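/- Let p be a prime, let L = ℚ_p((T)) be the field of formal Laurent series over ℚ_p, let Ω be a fixed algebraic closure of L, and let d be a positive integer. Then the intermediate field of Ω/L generated by all elements x ∈ Ω whose degree over L is at most d (equivalently, by the roots of all irreducible polynomials over L of degree at most d) is a finite extension of L. -/

import Mathlib

/-!
Let `K` be a complete nonarchimedean field and `f` an irreducible monic polynomial of degree `n`
over `K`, with a root `β`. Since conjugates have the same absolute value, `|f(α)| = |α - β| ^ n`
for every `α` in `K`, and therefore `|α₁ - α₂| ^ n ≤ max |f(α₁)| |f(α₂)|`: a monic polynomial with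
two distinct approximate roots is reducible. In characteristic zero a monic polynomial without
`X ^ (n - 1)` term, other than `X ^ n`, has two distinct roots, so this criterion applies after a
finite extension. For each degree one finite extension suffices:

* if `K` is locally compact, because the criterion is stable under small perturbations of `f` and
  rescaling moves these polynomials into a compact set;
* for Laurent series over a field `F` all of whose finite extensions have a finite extension
  splitting the polynomials of degree at most `n`, because substituting `T ^ n!` for `T` makes the
  Newton slopes integral, so that rescaling makes the reduction modulo `T` a polynomial over `F` of
  the same shape, whose roots are the approximate roots.

Inducting on the degree, a finite extension splits all polynomials of degree at most `d`.
-/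

open Polynomial IntermediateField

section BoundedField

/-- A field is *bounded* (Serre's property (F), when the field is perfect) if for every `d` the
elements of degree at most `d` generate a finite extension. -/
def IsBoundedField (K : Type*) [Field K] : Prop :=
  ∀ d : ℕ, FiniteDimensional K
    (adjoin K {x : AlgebraicClosure K | (minpoly K x).natDegree ≤ d})

/-- The embedding `φ` splits every monic polynomial of degree at most `d`. -/
def SplitsDegreeLE {K L : Type*} [Field K] [Field L] (φ : K →+* L) (d : ℕ) : Prop :=
  ∀ f : K[X], f.Monic → f.natDegree ≤ d → (f.map φ).Splits

theorem SplitsDegreeLE.finiteDimensional_adjoin {K M : Type*} [Field K] [Field M] {φ : K →+* M}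
    {d : ℕ} (hsplit : SplitsDegreeLE φ d) (hφ : φ.Finite) :
    FiniteDimensional K
      (adjoin K {x : AlgebraicClosure K | (minpoly K x).natDegree ≤ d}) := by
  let := φ.toAlgebra
  have : FiniteDimensional K M := hφ
  let j : M →ₐ[K] AlgebraicClosure K := IsAlgClosed.lift
  have hle : adjoin K {x : AlgebraicClosure K | (minpoly K x).natDegree ≤ d} ≤ j.fieldRange := by
    refine adjoin_le_iff.mpr fun x (hx : (minpoly K x).natDegree ≤ d) ↦ ?_
    have hxK : IsIntegral K x := Algebra.IsIntegral.isIntegral x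
    have hmap : ((minpoly K x).map φ).map (j : M →+* AlgebraicClosure K)
        = (minpoly K x).map (algebraMap K _) := by
      rw [Polynomial.map_map]
      exact congrArg (fun ψ ↦ (minpoly K x).map ψ) j.comp_algebraMap
    refine (hsplit _ (minpoly.monic hxK) hx).mem_range_of_isRoot
      ((minpoly.monic hxK).map φ).ne_zero (i := (j : M →+* AlgebraicClosure K)) ?_
    rw [hmap, IsRoot.def, eval_map_algebraMap, minpoly.aeval]
  have : FiniteDimensional K j.fieldRange := j.toLinearMap.finiteDimensional_range
  exact .of_injective (inclusion hle).toLinearMap (inclusion_injective hle)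

theorem exists_splitsDegreeLE_of_tower {ι : Type*} {E : ι → Type*} [∀ i, Field (E i)]
    (h : ∀ i D, 2 ≤ D → ∃ (j : ι) (φ : E i →+* E j), φ.Finite ∧
      ∀ f : (E i)[X], f.Monic → f.natDegree = D → ¬Irreducible (f.map φ))
    (i : ι) (d : ℕ) : ∃ (j : ι) (φ : E i →+* E j), φ.Finite ∧ SplitsDegreeLE φ d := by
  induction d using Nat.strong_induction_on generalizing i with | _ d ih
  obtain hd | hd := Nat.lt_or_ge d 2
  · exact ⟨i, .id _, .id _, fun f _ hf ↦ .of_natDegree_le_one (natDegree_map_le.trans (by lia))⟩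
  obtain ⟨j, φ, hφ, hred⟩ := h i d hd
  obtain ⟨k, ψ, hψ, hsplit⟩ := ih (d - 1) (by lia) j
  refine ⟨k, ψ.comp φ, hψ.comp hφ, fun f hf hfd ↦ ?_⟩
  rw [← Polynomial.map_map]
  obtain hfd | hfd := hfd.lt_or_eq
  · exact hsplit _ (hf.map φ) (by rw [hf.natDegree_map]; lia)
  have hdeg : (f.map φ).natDegree = d := by rw [hf.natDegree_map, hfd]
  have hne : f.map φ ≠ 1 := fun h ↦ by rw [h, natDegree_one] at hdeg; lia
  obtain ⟨u, v, hu, hv, huv, hvd⟩ : ∃ u v : (E j)[X], u.Monic ∧ v.Monic ∧ u * v = f.map φ ∧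
      v.natDegree ∈ Finset.Ioc 0 ((f.map φ).natDegree / 2) := by
    simpa [(hf.map φ).irreducible_iff_natDegree', hne] using hred f hf hfd
  rw [Finset.mem_Ioc] at hvd
  have hadd : u.natDegree + v.natDegree = d := by rw [← hu.natDegree_mul hv, huv, hdeg]
  rw [← huv, Polynomial.map_mul]
  exact (hsplit u hu (by lia)).mul (hsplit v hv (by lia))

theorem isBoundedField_of_tower {K : Type*} [Field K] {ι : Type*} {E : ι → Type*}
    [∀ i, Field (E i)] {i : ι} {φ₀ : K →+* E i} (hφ₀ : φ₀.Finite)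
    (h : ∀ i D, 2 ≤ D → ∃ (j : ι) (φ : E i →+* E j), φ.Finite ∧
      ∀ f : (E i)[X], f.Monic → f.natDegree = D → ¬Irreducible (f.map φ)) :
    IsBoundedField K := by
  intro d
  obtain ⟨j, φ, hφ, hsplit⟩ := exists_splitsDegreeLE_of_tower h i d
  refine SplitsDegreeLE.finiteDimensional_adjoin (φ := φ.comp φ₀) (fun f hf hfd ↦ ?_)
    (hφ.comp hφ₀)
  rw [← Polynomial.map_map]
  exact hsplit _ (hf.map φ₀) (by rwa [hf.natDegree_map])

theorem finite_inclusion {K Ω : Type*} [Field K] [Field Ω] [Algebra K Ω]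
    {E F : IntermediateField K Ω} (h : E ≤ F) [FiniteDimensional K F] :
    (inclusion h).toRingHom.Finite := by
  refine RingHom.Finite.of_comp_finite (f := algebraMap K E) ?_
  rw [show (inclusion h).toRingHom.comp (algebraMap K E) = algebraMap K F from
    (inclusion h).comp_algebraMap, RingHom.finite_algebraMap]
  infer_instance

theorem natDegree_minpoly_le_mul (K : Type*) {E Ω : Type*} [Field K] [Field E] [Field Ω]
    [Algebra K E] [Algebra E Ω] [Algebra K Ω] [IsScalarTower K E Ω] [FiniteDimensional K E]
    {x : Ω} (hx : IsIntegral E x) :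
    (minpoly K x).natDegree ≤ Module.finrank K E * (minpoly E x).natDegree := by
  have := adjoin.finiteDimensional hx
  have : FiniteDimensional K E⟮x⟯ := .trans K E E⟮x⟯
  have : IsScalarTower K E⟮x⟯ Ω := .to₁₃₄ K E E⟮x⟯ Ω
  calc (minpoly K x).natDegree = (minpoly K (AdjoinSimple.gen E x)).natDegree := by
        rw [← minpoly.algebraMap_eq (algebraMap E⟮x⟯ Ω).injective (AdjoinSimple.gen E x),
          AdjoinSimple.algebraMap_gen]
    _ ≤ Module.finrank K E⟮x⟯ := minpoly.natDegree_le _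
    _ = Module.finrank K E * (minpoly E x).natDegree := by
        rw [← Module.finrank_mul_finrank K E E⟮x⟯, adjoin.finrank hx]

theorem IsBoundedField.exists_splitsDegreeLE_inclusion {K : Type*} [Field K]
    (hK : IsBoundedField K) (E : IntermediateField K (AlgebraicClosure K)) [FiniteDimensional K E]
    (d : ℕ) : ∃ (F : IntermediateField K (AlgebraicClosure K)) (h : E ≤ F),
      FiniteDimensional K F ∧ SplitsDegreeLE (inclusion h).toRingHom d := by
  have := hK (Module.finrank K E * d)
  let F := E ⊔ adjoin K
    {x : AlgebraicClosure K | (minpoly K x).natDegree ≤ Module.finrank K E * d}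
  have hEF : E ≤ F := le_sup_left
  refine ⟨F, hEF, finiteDimensional_sup _ _, fun f hf hfd ↦ ?_⟩
  have hmap : (f.map (inclusion hEF).toRingHom).map (algebraMap F (AlgebraicClosure K))
      = f.map (algebraMap E _) := by
    rw [Polynomial.map_map]
    rfl
  refine .of_splits_map (algebraMap F (AlgebraicClosure K)) (IsAlgClosed.splits _) fun x hx ↦ ?_
  rw [hmap, mem_roots (hf.map _).ne_zero, IsRoot.def, eval_map_algebraMap] at hx
  have hxF : x ∈ F := le_sup_right (a := E) <| subset_adjoin _ _ <|
    calc (minpoly K x).natDegree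
        ≤ Module.finrank K E * (minpoly E x).natDegree :=
          natDegree_minpoly_le_mul K ⟨f, hf, by rwa [← aeval_def]⟩
      _ ≤ Module.finrank K E * d := by
          gcongr
          exact (natDegree_le_of_dvd (minpoly.dvd E x hx) hf.ne_zero).trans hfd
  exact ⟨⟨x, hxF⟩, rfl⟩

end BoundedField

section Depressed

theorem nextCoeff_taylor {R : Type*} [CommSemiring R] (r : R) (f : R[X]) :
    (taylor r f).nextCoeff = f.nextCoeff + f.natDegree * f.leadingCoeff * r := by
  rcases hn : f.natDegree with _ | n
  · simp [nextCoeff, natDegree_taylor, hn]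
  have hdeg : (hasseDeriv n f).natDegree ≤ 1 := (natDegree_hasseDeriv_le f n).trans (by lia)
  have h1 : 1 + n = n + 1 := add_comm 1 n
  rw [nextCoeff_of_natDegree_pos (by rw [natDegree_taylor]; lia),
    nextCoeff_of_natDegree_pos (by lia), natDegree_taylor, taylor_coeff, leadingCoeff, hn,
    Nat.add_sub_cancel, eval_eq_sum_range' (Nat.lt_succ_of_le hdeg)]
  simp [Finset.sum_range_succ, hasseDeriv_coeff, h1]

theorem nextCoeff_scaleRoots {R : Type*} [CommSemiring R] (f : R[X]) (s : R) :
    (f.scaleRoots s).nextCoeff = f.nextCoeff * s := by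
  rcases hn : f.natDegree with _ | n
  · simp [nextCoeff, hn]
  · rw [nextCoeff_of_natDegree_pos (by rw [natDegree_scaleRoots]; lia),
      nextCoeff_of_natDegree_pos (by lia), natDegree_scaleRoots, coeff_scaleRoots, hn,
      Nat.add_sub_cancel, Nat.add_sub_cancel_left, pow_one]

theorem irreducible_scaleRoots {K : Type*} [Field K] {f : K[X]} (hf : Irreducible f) {s : K}
    (hs : s ≠ 0) : Irreducible (f.scaleRoots s) := by
  have isUnit_scaleRoots (g : K[X]) (t : K) : IsUnit (g.scaleRoots t) ↔ IsUnit g := by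
    simp only [isUnit_iff_degree_eq_zero, degree_scaleRoots]
  refine ⟨by simpa only [isUnit_scaleRoots] using hf.not_isUnit, fun u v huv ↦ ?_⟩
  have : f = u.scaleRoots s⁻¹ * v.scaleRoots s⁻¹ := by
    rw [← mul_scaleRoots_of_noZeroDivisors, ← huv, ← scaleRoots_mul, mul_inv_cancel₀ hs,
      scaleRoots_one]
  simpa only [isUnit_scaleRoots] using hf.isUnit_or_isUnit this

theorem not_irreducible_map_of_depressed {K L : Type*} [Field K] [CharZero K] [Field L]
    (φ : K →+* L) {D : ℕ} (hD : 2 ≤ D)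
    (h : ∀ f : K[X], f.Monic → f.natDegree = D → f.nextCoeff = 0 → f ≠ X ^ D →
      ¬Irreducible (f.map φ)) {f : K[X]} (hf : f.Monic) (hfD : f.natDegree = D) :
    ¬Irreducible (f.map φ) := by
  let r : K := -(f.nextCoeff / D)
  have hirr : Irreducible (f.map φ) ↔ Irreducible ((taylor r f).map φ) := by
    rw [map_taylor, ← coe_taylorEquiv]
    exact (MulEquiv.irreducible_iff (taylorEquiv (φ r))).symm
  have hnext : (taylor r f).nextCoeff = 0 := by
    have : (D : K) ≠ 0 := by norm_cast; lia
    rw [nextCoeff_taylor, hfD, hf.leadingCoeff]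
    simp only [r]
    field_simp
    ring
  rw [hirr]
  obtain heq | hne := eq_or_ne (taylor r f) (X ^ D)
  · rw [heq, Polynomial.map_pow]
    exact not_irreducible_pow (by lia)
  · exact h _ ((leadingCoeff_taylor ..).trans hf) ((natDegree_taylor ..).trans hfD) hnext hne

theorem exists_ne_mem_roots_of_nextCoeff_eq_zero {K : Type*} [Field K] [CharZero K] {f : K[X]}
    (hf : f.Monic) (hsplit : f.Splits) (hnext : f.nextCoeff = 0) (hne : f ≠ X ^ f.natDegree) :
    ∃ a ∈ f.roots, ∃ b ∈ f.roots, a ≠ b := by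
  by_contra! heq
  refine hne ?_
  have hroots : ∃ a, f.roots = Multiset.replicate f.natDegree a := by
    obtain h | ⟨a, ha⟩ := f.roots.empty_or_exists_mem
    · exact ⟨0, by simp [hsplit.natDegree_eq_card_roots, h]⟩
    · exact ⟨a, Multiset.eq_replicate.mpr
        ⟨hsplit.natDegree_eq_card_roots.symm, fun b hb ↦ heq b hb a ha⟩⟩
  obtain ⟨a, ha⟩ := hroots
  have hf_eq : f = (X - C a) ^ f.natDegree := by
    conv_lhs => rw [hsplit.eq_prod_roots_of_monic hf, ha]
    simp
  have hsum : (f.natDegree : K) * a = 0 := by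
    simpa [ha, hnext] using hsplit.nextCoeff_eq_neg_sum_roots_of_monic hf
  obtain h | h := mul_eq_zero.mp hsum
  · rw [Nat.cast_eq_zero] at h
    rwa [h, pow_zero] at hf_eq ⊢
  · rwa [h, C_0, sub_zero] at hf_eq

theorem exists_ne_aeval_eq_zero_of_nextCoeff_eq_zero {K : Type*} (Ω : Type*) [Field K]
    [CharZero K] [Field Ω] [Algebra K Ω] [IsAlgClosed Ω] {f : K[X]} (hf : f.Monic)
    (hnext : f.nextCoeff = 0) (hne : f ≠ X ^ f.natDegree) :
    ∃ α β : Ω, α ≠ β ∧ aeval α f = 0 ∧ aeval β f = 0 := by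
  have := charZero_of_injective_algebraMap (algebraMap K Ω).injective
  obtain ⟨α, hα, β, hβ, hαβ⟩ := exists_ne_mem_roots_of_nextCoeff_eq_zero
    (hf.map (algebraMap K Ω)) (IsAlgClosed.splits _) (by rw [nextCoeff_map_eq, hnext, map_zero])
    (fun h ↦ hne (map_injective _ (algebraMap K Ω).injective (by simpa using h)))
  simp only [← eval_map_algebraMap]
  exact ⟨α, β, hαβ, isRoot_of_mem_roots hα, isRoot_of_mem_roots hβ⟩

end Depressed

section Ultrametric

theorem isUltrametricDist_spectralNorm (K L : Type*) [NontriviallyNormedField K] [CompleteSpace K]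
    [IsUltrametricDist K] [Field L] [Algebra K L] [Algebra.IsAlgebraic K L] :
    @IsUltrametricDist L (spectralNorm.nontriviallyNormedField K L).toDist :=
  letI := spectralNorm.nontriviallyNormedField K L
  IsUltrametricDist.isUltrametricDist_of_isNonarchimedean_norm isNonarchimedean_spectralNorm

variable {K : Type*} [NontriviallyNormedField K] [CompleteSpace K] [IsUltrametricDist K]

theorem norm_eval_eq_spectralNorm_pow {L : Type*} [Field L] [Algebra K L]
    [Algebra.IsAlgebraic K L] {f : K[X]} (hf : f.Monic) (hirr : Irreducible f) {β : L}
    (hβ : aeval β f = 0) (a : K) :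
    ‖f.eval a‖ = spectralNorm K L (β - algebraMap K L a) ^ f.natDegree := by
  have hmin : minpoly K (β - algebraMap K L a) = f.comp (X + C a) := by
    rw [minpoly.sub_algebraMap, minpoly.eq_of_irreducible_of_monic hirr hβ hf]
  have hcoeff : (f.comp (X + C a)).coeff 0 = f.eval a := by
    rw [coeff_zero_eq_eval_zero, eval_comp]
    simp
  have hdeg : (f.comp (X + C a)).natDegree = f.natDegree := natDegree_taylor f a
  rw [spectralNorm.spectralNorm_eq_norm_coeff_zero_rpow, hmin, hcoeff, hdeg,
    ← Real.rpow_natCast, ← Real.rpow_mul (norm_nonneg _),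
    one_div_mul_cancel (by exact_mod_cast hirr.natDegree_pos.ne'), Real.rpow_one]

theorem norm_sub_pow_le_max_norm_eval {f : K[X]} (hf : f.Monic) (hirr : Irreducible f)
    (a b : K) : ‖a - b‖ ^ f.natDegree ≤ max ‖f.eval a‖ ‖f.eval b‖ := by
  let Ω := AlgebraicClosure K
  let := spectralNorm.nontriviallyNormedField K Ω
  let := spectralNorm.normedAlgebra K Ω
  have := isUltrametricDist_spectralNorm K Ω
  obtain ⟨β, hβ⟩ := IsAlgClosed.exists_aeval_eq_zero Ω f
    (degree_pos_of_irreducible hirr).ne'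
  have hnorm (c : K) : ‖f.eval c‖ = ‖β - algebraMap K Ω c‖ ^ f.natDegree :=
    norm_eval_eq_spectralNorm_pow hf hirr hβ c
  have hsub : ‖a - b‖ ≤ max ‖β - algebraMap K Ω a‖ ‖β - algebraMap K Ω b‖ :=
    calc ‖a - b‖ = dist (algebraMap K Ω a) (algebraMap K Ω b) := by
          rw [dist_eq_norm, ← map_sub, norm_algebraMap']
      _ ≤ max (dist (algebraMap K Ω a) β) (dist β (algebraMap K Ω b)) := dist_triangle_max _ _ _
      _ = _ := by rw [dist_comm, dist_eq_norm, dist_eq_norm]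
  rw [hnorm, hnorm, ← (pow_left_monotoneOn).map_max (norm_nonneg _) (norm_nonneg _)]
  gcongr

end Ultrametric

section MonicOfFn

variable {R : Type*} [CommRing R] {D : ℕ}

/-- The monic polynomial of degree `D` with lower coefficients `a`, so that the space of monic
polynomials of degree `D` is topologized as `Fin D → R`. -/
noncomputable def monicOfFn (a : Fin D → R) : R[X] :=
  X ^ D + ∑ i, C (a i) * X ^ (i : ℕ)

theorem monic_monicOfFn (a : Fin D → R) : (monicOfFn a).Monic :=
  monic_X_pow_add (degree_sum_fin_lt a)

theorem natDegree_monicOfFn [Nontrivial R] (a : Fin D → R) : (monicOfFn a).natDegree = D :=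
  natDegree_eq_of_degree_eq_some <|
    (degree_add_eq_left_of_degree_lt (by simpa using degree_sum_fin_lt a)).trans (degree_X_pow D)

theorem coeff_monicOfFn (a : Fin D → R) (i : Fin D) : (monicOfFn a).coeff i = a i := by
  simp [monicOfFn, coeff_X_pow, i.2.ne, Fin.val_inj]

theorem nextCoeff_monicOfFn [Nontrivial R] {n : ℕ} (a : Fin (n + 1) → R) :
    (monicOfFn a).nextCoeff = a (Fin.last n) := by
  rw [nextCoeff_of_natDegree_pos (by rw [natDegree_monicOfFn]; lia), natDegree_monicOfFn]
  exact coeff_monicOfFn a (Fin.last n)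

theorem monicOfFn_ne_X_pow {a : Fin D → R} (ha : a ≠ 0) : monicOfFn a ≠ X ^ D := by
  refine fun h ↦ ha (funext fun i ↦ ?_)
  rw [← coeff_monicOfFn a, h, coeff_X_pow, if_neg i.2.ne, Pi.zero_apply]

theorem monicOfFn_coeff {f : R[X]} (hf : f.Monic) (hfD : f.natDegree = D) :
    monicOfFn (fun i : Fin D ↦ f.coeff i) = f := by
  subst hfD
  conv_rhs => rw [hf.as_sum, Finset.sum_range]
  rfl

theorem aeval_monicOfFn {A : Type*} [CommRing A] [Algebra R A] (x : A) (a : Fin D → R) :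
    aeval x (monicOfFn a) = x ^ D + ∑ i, algebraMap R A (a i) * x ^ (i : ℕ) := by
  simp [monicOfFn]

end MonicOfFn

section Compactness

theorem not_irreducible_map_algebraMap_of_le {K Ω : Type*} [Field K] [Field Ω] [Algebra K Ω]
    {E F : IntermediateField K Ω} (h : E ≤ F) {f : K[X]} (hf : f.Monic)
    (hred : ¬Irreducible (f.map (algebraMap K E))) : ¬Irreducible (f.map (algebraMap K F)) := by
  rw [← (inclusion h).comp_algebraMap, ← Polynomial.map_map]
  exact fun hirr ↦ hred ((hf.map _).irreducible_of_irreducible_map _ _ hirr)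

variable {K : Type*} [NontriviallyNormedField K] [CompleteSpace K] [IsUltrametricDist K]

theorem eventually_not_irreducible_map {E : Type*} [Field E] [Algebra K E]
    [FiniteDimensional K E] {D : ℕ} {a : Fin D → K} {α β : E} (hne : α ≠ β)
    (hα : aeval α (monicOfFn a) = 0) (hβ : aeval β (monicOfFn a) = 0) :
    ∀ᶠ b in nhds a, ¬Irreducible ((monicOfFn b).map (algebraMap K E)) := by
  let := spectralNorm.nontriviallyNormedField K E
  let := spectralNorm.normedAlgebra K E
  have := isUltrametricDist_spectralNorm K E
  have : CompleteSpace E := FiniteDimensional.complete K E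
  have hcont (γ : E) : Continuous fun b : Fin D → K ↦ aeval γ (monicOfFn b) := by
    simp only [aeval_monicOfFn]
    fun_prop
  have hlim : Filter.Tendsto
      (fun b ↦ max ‖aeval α (monicOfFn b)‖ ‖aeval β (monicOfFn b)‖) (nhds a) (nhds 0) := by
    simpa [hα, hβ] using ((hcont α).norm.max (hcont β).norm).tendsto a
  have hpos : 0 < ‖α - β‖ ^ D := pow_pos (norm_pos_iff.mpr (sub_ne_zero.mpr hne)) D
  filter_upwards [hlim.eventually_lt_const hpos] with b hb hirr
  have hle := norm_sub_pow_le_max_norm_eval ((monic_monicOfFn b).map _) hirr α β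
  rw [natDegree_map, natDegree_monicOfFn, eval_map_algebraMap, eval_map_algebraMap] at hle
  exact hle.not_gt hb

theorem exists_not_irreducible_map_of_isCompact {Ω : Type*} [Field Ω]
    [Algebra K Ω] [Algebra.IsAlgebraic K Ω] {D : ℕ} {S : Set (Fin D → K)} (hS : IsCompact S)
    (hroots : ∀ a ∈ S, ∃ α β : Ω, α ≠ β ∧ aeval α (monicOfFn a) = 0 ∧
      aeval β (monicOfFn a) = 0) :
    ∃ E : IntermediateField K Ω, FiniteDimensional K E ∧
      ∀ a ∈ S, ¬Irreducible ((monicOfFn a).map (algebraMap K E)) := by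
  refine hS.induction_on (p := fun S ↦ ∃ E : IntermediateField K Ω, FiniteDimensional K E ∧
    ∀ a ∈ S, ¬Irreducible ((monicOfFn a).map (algebraMap K E))) ⟨⊥, inferInstance, by simp⟩
    (fun S S' hSS' ⟨E, hE, h⟩ ↦ ⟨E, hE, fun a ha ↦ h a (hSS' ha)⟩) ?_ fun a ha ↦ ?_
  · rintro S S' ⟨E, _, hE⟩ ⟨E', _, hE'⟩
    refine ⟨E ⊔ E', finiteDimensional_sup _ _, ?_⟩
    rintro a (ha | ha)
    · exact not_irreducible_map_algebraMap_of_le le_sup_left (monic_monicOfFn a) (hE a ha)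
    · exact not_irreducible_map_algebraMap_of_le le_sup_right (monic_monicOfFn a) (hE' a ha)
  · obtain ⟨α, β, hne, hα, hβ⟩ := hroots a ha
    let E := adjoin K {α, β}
    have : FiniteDimensional K E :=
      finiteDimensional_adjoin fun x _ ↦ Algebra.IsIntegral.isIntegral x
    have aeval_eq_zero {x : E} (hx : aeval (x : Ω) (monicOfFn a) = 0) :
        aeval x (monicOfFn a) = 0 :=
      (algebraMap E Ω).injective (by rw [← aeval_algebraMap_apply, map_zero]; exact hx)
    let α' : E := ⟨α, subset_adjoin _ _ (by simp)⟩
    let β' : E := ⟨β, subset_adjoin _ _ (by simp)⟩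
    exact ⟨_, mem_nhdsWithin_of_mem_nhds (eventually_not_irreducible_map (α := α') (β := β')
      (fun h ↦ hne (congrArg Subtype.val h)) (aeval_eq_zero hα) (aeval_eq_zero hβ)),
      E, this, fun _ hb ↦ hb⟩

end Compactness

section SpectralValue

theorem norm_coeff_le_spectralValue_pow {R : Type*} [SeminormedRing R] (f : R[X]) {i : ℕ}
    (hi : i < f.natDegree) : ‖f.coeff i‖ ≤ spectralValue f ^ (f.natDegree - i) := by
  have hle : spectralValueTerms f i ≤ spectralValue f :=
    le_ciSup (spectralValueTerms_bddAbove f) i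
  rwa [spectralValueTerms_of_lt_natDegree f hi, one_div, ← Nat.cast_sub hi.le,
    Real.rpow_inv_le_iff_of_pos (norm_nonneg _) (spectralValue_nonneg f)
      (by exact_mod_cast Nat.sub_pos_of_lt hi), Real.rpow_natCast] at hle

theorem exists_norm_coeff_eq_spectralValue_pow {R : Type*} [SeminormedRing R] {f : R[X]}
    (hf : spectralValue f ≠ 0) :
    ∃ i < f.natDegree, ‖f.coeff i‖ = spectralValue f ^ (f.natDegree - i) := by
  obtain ⟨i, hi⟩ := (Set.range_nonempty _).csSup_mem (spectralValueTerms_finite_range f)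
  change spectralValueTerms f i = spectralValue f at hi
  obtain hlt | hge := lt_or_ge i f.natDegree
  · refine ⟨i, hlt, ?_⟩
    rw [← hi, spectralValueTerms_of_lt_natDegree f hlt, one_div, ← Nat.cast_sub hlt.le,
      Real.rpow_inv_natCast_pow (norm_nonneg _) (by lia)]
  · exact absurd (hi.symm.trans (spectralValueTerms_of_natDegree_le f hge)) hf

theorem exists_norm_coeff_scaleRoots_le_one {K : Type*} [NormedField K] {c : K} (hc : 1 < ‖c‖)
    {f : K[X]} (hf : f.Monic) (hne : f ≠ X ^ f.natDegree) :
    ∃ s ≠ 0, (∀ i < f.natDegree, ‖(f.scaleRoots s).coeff i‖ ≤ 1) ∧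
      ∃ i < f.natDegree, (‖c‖⁻¹) ^ f.natDegree ≤ ‖(f.scaleRoots s).coeff i‖ := by
  have hρ : 0 < spectralValue f :=
    (spectralValue_nonneg f).lt_of_ne' (mt (spectralValue_eq_zero_iff hf).mp hne)
  obtain ⟨n, hlt, hle⟩ := exists_mem_Ioc_zpow hρ hc
  have hc0 : c ≠ 0 := norm_pos_iff.mp (by linarith)
  let s := (c ^ (n + 1))⁻¹
  have hs : s ≠ 0 := by simp [s, zpow_ne_zero _ hc0]
  have hupper : spectralValue f * ‖s‖ ≤ 1 := by
    rw [norm_inv, norm_zpow]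
    exact mul_inv_le_one_of_le₀ hle (by positivity)
  have hlower : ‖c‖⁻¹ ≤ spectralValue f * ‖s‖ := by
    have hc' : 0 < ‖c‖ := norm_pos_iff.mpr hc0
    calc ‖c‖⁻¹ = ‖c‖ ^ n * ‖s‖ := by
          rw [norm_inv, norm_zpow, zpow_add_one₀ hc'.ne']
          field_simp
      _ ≤ spectralValue f * ‖s‖ := by gcongr
  refine ⟨s, hs, fun i hi ↦ ?_, ?_⟩
  · rw [coeff_scaleRoots, norm_mul, norm_pow]
    calc ‖f.coeff i‖ * ‖s‖ ^ (f.natDegree - i)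
        ≤ (spectralValue f * ‖s‖) ^ (f.natDegree - i) := by
          rw [mul_pow]
          gcongr
          exact norm_coeff_le_spectralValue_pow f hi
      _ ≤ 1 := pow_le_one₀ (by positivity) hupper
  · obtain ⟨i, hi, heq⟩ := exists_norm_coeff_eq_spectralValue_pow hρ.ne'
    refine ⟨i, hi, ?_⟩
    rw [coeff_scaleRoots, norm_mul, norm_pow, heq, ← mul_pow]
    calc ‖c‖⁻¹ ^ f.natDegree ≤ ‖c‖⁻¹ ^ (f.natDegree - i) :=
          pow_le_pow_of_le_one (by positivity) (inv_le_one_of_one_le₀ hc.le) (Nat.sub_le _ _)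
      _ ≤ _ := by gcongr

end SpectralValue

section ProperSpace

/-- Coefficient vectors of the depressed monic polynomials of degree `D` whose largest lower
coefficient has norm in `[r, 1]`; every depressed polynomial other than `X ^ D` can be rescaled
into this set when `r` is small. -/
def depressedShell (K : Type*) [NormedField K] (D : ℕ) (r : ℝ) : Set (Fin D → K) :=
  {a | ‖a‖ ∈ Set.Icc r 1 ∧ (monicOfFn a).nextCoeff = 0}

theorem isCompact_depressedShell (K : Type*) [NormedField K] [ProperSpace K] (D : ℕ) (r : ℝ) :
    IsCompact (depressedShell K D r) := by
  have hnext : Continuous fun a : Fin D → K ↦ (monicOfFn a).nextCoeff := by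
    cases D with
    | zero => exact continuous_of_discreteTopology
    | succ n => simpa only [nextCoeff_monicOfFn] using continuous_apply (Fin.last n)
  exact (isCompact_closedBall (0 : Fin D → K) 1).of_isClosed_subset
    ((isClosed_Icc.preimage continuous_norm).inter (isClosed_eq hnext continuous_const))
    fun a ha ↦ mem_closedBall_zero_iff.mpr ha.1.2

theorem exists_scaleRoots_mem_depressedShell {K : Type*} [NormedField K] {c : K} (hc : 1 < ‖c‖)
    {D : ℕ} {f : K[X]} (hf : f.Monic) (hfD : f.natDegree = D) (hnext : f.nextCoeff = 0)
    (hne : f ≠ X ^ D) :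
    ∃ s ≠ 0, ∃ a ∈ depressedShell K D (‖c‖⁻¹ ^ D), monicOfFn a = f.scaleRoots s := by
  subst hfD
  obtain ⟨s, hs, hle, i, hi, hge⟩ := exists_norm_coeff_scaleRoots_le_one hc hf hne
  have heq := monicOfFn_coeff ((monic_scaleRoots_iff s).mpr hf) (natDegree_scaleRoots f s)
  refine ⟨s, hs, _, ⟨⟨?_, ?_⟩, ?_⟩, heq⟩
  · exact hge.trans
      (norm_le_pi_norm (fun i : Fin f.natDegree ↦ (f.scaleRoots s).coeff i) ⟨i, hi⟩)
  · exact (pi_norm_le_iff_of_nonneg zero_le_one).mpr fun i ↦ hle i i.2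
  · rw [heq, nextCoeff_scaleRoots, hnext, zero_mul]

theorem exists_not_irreducible_map_of_properSpace (K Ω : Type*) [NontriviallyNormedField K]
    [IsUltrametricDist K] [ProperSpace K] [CharZero K] [Field Ω] [Algebra K Ω] [IsAlgClosure K Ω]
    {D : ℕ} (hD : 2 ≤ D) :
    ∃ E : IntermediateField K Ω, FiniteDimensional K E ∧ ∀ f : K[X], f.Monic → f.natDegree = D →
      ¬Irreducible (f.map (algebraMap K E)) := by
  have := IsAlgClosure.isAlgebraic (R := K) (K := Ω)
  have := IsAlgClosure.isAlgClosed K (K := Ω)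
  obtain ⟨c, hc⟩ := NormedField.exists_one_lt_norm K
  have hroots : ∀ a ∈ depressedShell K D (‖c‖⁻¹ ^ D), ∃ α β : Ω, α ≠ β ∧
      aeval α (monicOfFn a) = 0 ∧ aeval β (monicOfFn a) = 0 := by
    rintro a ⟨⟨hge, -⟩, hnext⟩
    have ha : a ≠ 0 := norm_pos_iff.mp (hge.trans_lt' (by positivity))
    exact exists_ne_aeval_eq_zero_of_nextCoeff_eq_zero Ω (monic_monicOfFn a) hnext
      (by rw [natDegree_monicOfFn]; exact monicOfFn_ne_X_pow ha)
  obtain ⟨E, hE, hred⟩ :=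
    exists_not_irreducible_map_of_isCompact (isCompact_depressedShell K D _) hroots
  refine ⟨E, hE, fun f hf hfD ↦
    not_irreducible_map_of_depressed _ hD (fun g hg hgD hnext hne hirr ↦ ?_) hf hfD⟩
  obtain ⟨s, hs, a, ha, heq⟩ := exists_scaleRoots_mem_depressedShell hc hg hgD hnext hne
  refine hred a ha ?_
  rw [heq, map_scaleRoots _ _ _ (by simp [hg.leadingCoeff])]
  exact irreducible_scaleRoots hirr (by simpa)

theorem isBoundedField_of_properSpace (K : Type*) [NontriviallyNormedField K]
    [IsUltrametricDist K] [ProperSpace K] [CharZero K] : IsBoundedField K := by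
  let Ω := AlgebraicClosure K
  let ι := {E : IntermediateField K Ω // FiniteDimensional K E}
  refine isBoundedField_of_tower (ι := ι) (E := fun E ↦ E.1) (i := ⟨⊥, inferInstance⟩)
    (φ₀ := algebraMap K (⊥ : IntermediateField K Ω))
    (RingHom.finite_algebraMap.mpr inferInstance) fun ⟨F, _⟩ D hD ↦ ?_
  let := spectralNorm.nontriviallyNormedField K F
  let := spectralNorm.normedAlgebra K F
  have := isUltrametricDist_spectralNorm K F
  have : ProperSpace F := FiniteDimensional.proper K F
  have : IsAlgClosure F Ω := ⟨inferInstance, inferInstance⟩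
  obtain ⟨E, hE, hred⟩ := exists_not_irreducible_map_of_properSpace F Ω hD
  have hfin : (algebraMap F E).Finite := RingHom.finite_algebraMap.mpr hE
  exact ⟨⟨E.restrictScalars K, .trans K F E⟩, algebraMap F E, hfin, hred⟩

end ProperSpace

section Hensel

open MonoidWithZeroHom Valuation

variable {F : Type*} [Field F]

theorem laurentSeries_valuation_coe_lt_one_iff (g : PowerSeries F) :
    Valued.v (HahnSeries.ofPowerSeries ℤ F g) < (1 : WithZero (Multiplicative ℤ)) ↔
      PowerSeries.constantCoeff g = 0 := by
  rw [← LaurentSeries.coe_algebraMap]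
  exact (IsDedekindDomain.HeightOneSpectrum.valuation_lt_one_iff_mem _ _).trans
    (Ideal.mem_span_singleton.trans PowerSeries.X_dvd_iff)

theorem nonempty_rankOne_laurentSeries :
    Nonempty (RankOne (Valued.v (R := LaurentSeries F) (Γ₀ := WithZero (Multiplicative ℤ)))) := by
  have : (Valued.v (R := LaurentSeries F) (Γ₀ := WithZero (Multiplicative ℤ))).IsNontrivial := by
    obtain ⟨x, hx⟩ := LaurentSeries.valuation_surjective (K := F) (.exp 1)
    exact ⟨x, by simp [hx], by simp [hx]⟩
  exact nonempty_rankOne_iff_mulArchimedean.mpr inferInstance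

theorem not_irreducible_map_ofPowerSeries {H : (PowerSeries F)[X]} (hH : H.Monic)
    {a b : F} (hab : a ≠ b) (ha : (H.map PowerSeries.constantCoeff).IsRoot a)
    (hb : (H.map PowerSeries.constantCoeff).IsRoot b) :
    ¬Irreducible (H.map (HahnSeries.ofPowerSeries ℤ F)) := by
  obtain ⟨_⟩ := nonempty_rankOne_laurentSeries (F := F)
  let := Valued.toNontriviallyNormedField (L := LaurentSeries F)
    (Γ₀ := WithZero (Multiplicative ℤ))
  have norm_lt_one_iff (g : PowerSeries F) :
      ‖HahnSeries.ofPowerSeries ℤ F g‖ < 1 ↔ PowerSeries.constantCoeff g = 0 :=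
    (Valued.toNormedField.norm_lt_one_iff ..).trans (laurentSeries_valuation_coe_lt_one_iff g)
  have norm_eval_lt_one {c : F} (hc : (H.map PowerSeries.constantCoeff).IsRoot c) :
      ‖(H.map (HahnSeries.ofPowerSeries ℤ F)).eval
        (HahnSeries.ofPowerSeries ℤ F (PowerSeries.C c))‖ < 1 := by
    rw [eval_map_apply, norm_lt_one_iff, ← eval_map_apply, PowerSeries.constantCoeff_C]
    exact hc
  intro hirr
  have hle := norm_sub_pow_le_max_norm_eval (hH.map (HahnSeries.ofPowerSeries ℤ F)) hirr
    (HahnSeries.ofPowerSeries ℤ F (PowerSeries.C a))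
    (HahnSeries.ofPowerSeries ℤ F (PowerSeries.C b))
  have hlt := hle.trans_lt (max_lt (norm_eval_lt_one ha) (norm_eval_lt_one hb))
  rw [← _root_.map_sub, ← _root_.map_sub,
    pow_lt_one_iff_of_nonneg (norm_nonneg _) hirr.natDegree_pos.ne', norm_lt_one_iff,
    PowerSeries.constantCoeff_C, sub_eq_zero] at hlt
  exact hab hlt

end Hensel

section LaurentMaps

theorem finite_of_forall_sum_eq {A B ι : Type*} [CommRing A] [CommRing B] [Fintype ι]
    {f : A →+* B} (v : ι → B) (h : ∀ b, ∃ c : ι → A, ∑ i, f (c i) * v i = b) : f.Finite := by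
  let := f.toAlgebra
  exact Module.Finite.of_surjective (Fintype.linearCombination A v) h

/-- The ring homomorphism between rings of Hahn series given by applying `φ` coefficientwise. -/
def hahnSeriesMap (Γ : Type*) [AddCommMonoid Γ] [PartialOrder Γ] [IsOrderedCancelAddMonoid Γ]
    {R S : Type*} [Semiring R] [Semiring S] (φ : R →+* S) : HahnSeries Γ R →+* HahnSeries Γ S where
  toFun x := x.map φ
  map_one' := HahnSeries.map_one φ.toMonoidWithZeroHom
  map_zero' := HahnSeries.map_zero (φ : ZeroHom R S)
  map_mul' _ _ := HahnSeries.map_mul (φ : R →ₙ+* S)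
  map_add' _ _ := HahnSeries.map_add (φ : R →+ S)

@[simp]
theorem coeff_hahnSeriesMap {Γ : Type*} [AddCommMonoid Γ] [PartialOrder Γ]
    [IsOrderedCancelAddMonoid Γ] {R S : Type*} [Semiring R] [Semiring S] (φ : R →+* S)
    (x : HahnSeries Γ R) (n : Γ) : (hahnSeriesMap Γ φ x).coeff n = φ (x.coeff n) :=
  rfl

theorem finite_hahnSeriesMap (Γ : Type*) [AddCommMonoid Γ] [PartialOrder Γ]
    [IsOrderedCancelAddMonoid Γ] {F L : Type*} [Field F] [Field L] {φ : F →+* L} (hφ : φ.Finite) :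
    (hahnSeriesMap Γ φ).Finite := by
  let := φ.toAlgebra
  have : Module.Finite F L := hφ
  let b := Module.finBasis F L
  refine finite_of_forall_sum_eq (fun i ↦ HahnSeries.C (b i)) fun x ↦
    ⟨fun i ↦ x.map (b.coord i), ?_⟩
  ext n
  simp_rw [HahnSeries.coeff_sum, mul_comm _ (HahnSeries.C _), HahnSeries.C_mul_eq_smul,
    HahnSeries.coeff_smul, coeff_hahnSeriesMap, HahnSeries.map_coeff, smul_eq_mul, mul_comm (b _)]
  exact b.sum_repr (x.coeff n)

variable {R : Type*} [CommRing R]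

/-- The substitution `T ↦ T ^ m` on Laurent series: the totally ramified extension of degree `m`
obtained by adjoining an `m`-th root of `T`, with the root renamed `T`. -/
noncomputable def laurentRamify (R : Type*) [CommRing R] (m : ℕ) [NeZero m] :
    LaurentSeries R →+* LaurentSeries R :=
  HahnSeries.embDomainRingHom (AddMonoidHom.mulLeft (m : ℤ))
    (mul_right_injective₀ (NeZero.ne _)) fun _ _ ↦ mul_le_mul_iff_right₀ (by simp [NeZero.pos])

theorem coeff_laurentRamify (m : ℕ) [NeZero m] (x : LaurentSeries R) (n : ℤ) :
    (laurentRamify R m x).coeff n = if (m : ℤ) ∣ n then x.coeff (n / m) else 0 := by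
  split_ifs with h
  · obtain ⟨k, rfl⟩ := h
    rw [Int.mul_ediv_cancel_left _ (NeZero.ne _)]
    exact HahnSeries.embDomain_coeff (f := ⟨⟨AddMonoidHom.mulLeft (m : ℤ), _⟩, _⟩)
  · exact HahnSeries.embDomain_of_notMem_range fun ⟨k, hk⟩ ↦ h ⟨k, hk.symm⟩

theorem dvd_order_laurentRamify (m : ℕ) [NeZero m] (x : LaurentSeries R) :
    (m : ℤ) ∣ (laurentRamify R m x).order := by
  by_contra h
  have hzero : (laurentRamify R m x).coeff (laurentRamify R m x).order = 0 := by
    rw [coeff_laurentRamify, if_neg h]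
  exact h (by rw [HahnSeries.coeff_order_eq_zero.mp hzero, HahnSeries.order_zero]; simp)

theorem finite_laurentRamify (m : ℕ) [NeZero m] : (laurentRamify R m).Finite := by
  have hm : (0 : ℤ) < m := by simp [NeZero.pos]
  refine finite_of_forall_sum_eq (fun i : Fin m ↦ HahnSeries.single (i : ℤ) 1) fun x ↦ ?_
  have hbdd (i : Fin m) : BddBelow (Function.support fun k : ℤ ↦ x.coeff (m * k + i)) := by
    refine ⟨x.order / m, fun k hk ↦ Int.lt_add_one_iff.mp (Int.ediv_lt_of_lt_mul hm ?_)⟩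
    have := HahnSeries.order_le_of_coeff_ne_zero hk
    linarith [i.2]
  refine ⟨fun i ↦ .ofSuppBddBelow _ (hbdd i), ?_⟩
  ext k
  have hterm (i : Fin m) : (laurentRamify R m (.ofSuppBddBelow _ (hbdd i)) *
      HahnSeries.single (i : ℤ) 1).coeff k = if i = k % m then x.coeff k else 0 := by
    have hdvd : (m : ℤ) ∣ k - i ↔ (i : ℤ) = k % m := by
      rw [← Int.modEq_iff_dvd, Int.ModEq, Int.emod_eq_of_lt (by simp) (by simp)]
    rw [HahnSeries.coeff_mul_single, mul_one, coeff_laurentRamify]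
    simp only [hdvd]
    split_ifs with h
    · simp [Int.mul_ediv_cancel' (hdvd.mpr h)]
    · rfl
  have hmod : ((k % m).toNat : ℤ) = k % m := Int.toNat_of_nonneg (Int.emod_nonneg k hm.ne')
  rw [HahnSeries.coeff_sum, Finset.sum_congr rfl fun i _ ↦ hterm i,
    Finset.sum_eq_single ⟨(k % m).toNat, by have := Int.emod_lt_of_pos k hm; lia⟩]
  · simp [hmod]
  · intro i _ hi
    rw [if_neg fun h ↦ hi (Fin.ext (by simp [← h]))]
  · simp

end LaurentMaps

section Newton

variable {F : Type*} [Field F]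

theorem mem_range_ofPowerSeries {x : LaurentSeries F} (hx : ∀ k < 0, x.coeff k = 0) :
    x ∈ Set.range (HahnSeries.ofPowerSeries ℤ F) := by
  refine ⟨PowerSeries.mk fun n ↦ x.coeff n, ?_⟩
  ext k
  rw [PowerSeries.coeff_coe]
  split_ifs with hk
  · exact (hx k hk).symm
  · rw [PowerSeries.coeff_mk, Int.natAbs_of_nonneg (not_lt.mp hk)]

theorem coeff_coeff_scaleRoots_single (f : (LaurentSeries F)[X]) (n k : ℤ) (i : ℕ) :
    ((f.scaleRoots (HahnSeries.single n 1)).coeff i).coeff k =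
      (f.coeff i).coeff (k - n * (f.natDegree - i : ℕ)) := by
  rw [coeff_scaleRoots, HahnSeries.single_pow, one_pow, HahnSeries.coeff_mul_single, mul_one,
    nsmul_eq_mul, mul_comm n]

theorem exists_newton_slope {f : (LaurentSeries F)[X]} (hf : f.Monic)
    (hne : f ≠ X ^ f.natDegree)
    (hdvd : ∀ i < f.natDegree, ((f.natDegree - i : ℕ) : ℤ) ∣ (f.coeff i).order) :
    ∃ s : ℤ, (∀ i < f.natDegree, f.coeff i ≠ 0 → s * (f.natDegree - i : ℕ) ≤ (f.coeff i).order) ∧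
      ∃ i < f.natDegree, f.coeff i ≠ 0 ∧ s * (f.natDegree - i : ℕ) = (f.coeff i).order := by
  have mem_support {i : ℕ} : i ∈ f.eraseLead.support ↔ i < f.natDegree ∧ f.coeff i ≠ 0 := by
    rw [eraseLead_support, Finset.mem_erase, mem_support_iff]
    exact ⟨fun h ↦ ⟨(le_natDegree_of_ne_zero h.2).lt_of_ne h.1, h.2⟩, fun h ↦ ⟨h.1.ne, h.2⟩⟩
  have hsupp : f.eraseLead.support.Nonempty := by
    refine nonempty_support_iff.mpr fun h ↦ hne ?_
    simpa [h, hf.leadingCoeff] using f.eraseLead_add_C_mul_X_pow.symm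
  have hslope {i : ℕ} (hi : i < f.natDegree) :
      (f.coeff i).order / (f.natDegree - i : ℕ) * (f.natDegree - i : ℕ) = (f.coeff i).order :=
    Int.ediv_mul_cancel (hdvd i hi)
  obtain ⟨i₀, hi₀, hmin⟩ := f.eraseLead.support.exists_min_image
    (fun i ↦ (f.coeff i).order / (f.natDegree - i : ℕ)) hsupp
  obtain ⟨hlt₀, hne₀⟩ := mem_support.mp hi₀
  refine ⟨_, fun i hi hne ↦ ?_, i₀, hlt₀, hne₀, hslope hlt₀⟩
  rw [← hslope hi]
  gcongr
  exact hmin i (mem_support.mpr ⟨hi, hne⟩)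

theorem exists_scaleRoots_eq_map_ofPowerSeries {f : (LaurentSeries F)[X]} (hf : f.Monic)
    (hne : f ≠ X ^ f.natDegree)
    (hdvd : ∀ i < f.natDegree, ((f.natDegree - i : ℕ) : ℤ) ∣ (f.coeff i).order) :
    ∃ (n : ℤ) (H : (PowerSeries F)[X]), H.Monic ∧
      H.map (HahnSeries.ofPowerSeries ℤ F) = f.scaleRoots (HahnSeries.single n 1) ∧
      H.map PowerSeries.constantCoeff ≠ X ^ f.natDegree := by
  obtain ⟨s, hs, i₀, hi₀, hne₀, hs₀⟩ := exists_newton_slope hf hne hdvd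
  let g := f.scaleRoots (HahnSeries.single (-s) 1)
  have hg : g.Monic := (monic_scaleRoots_iff _).mpr hf
  have hlifts : g ∈ lifts (HahnSeries.ofPowerSeries ℤ F) := by
    refine (lifts_iff_coeff_lifts _).mpr fun i ↦ mem_range_ofPowerSeries fun k hk ↦ ?_
    rw [coeff_coeff_scaleRoots_single]
    obtain hi | rfl | hi := lt_trichotomy i f.natDegree
    · by_cases h0 : f.coeff i = 0
      · simp [h0]
      · exact HahnSeries.coeff_eq_zero_of_lt_order (by linarith [hs i hi h0])
    · rw [hf.coeff_natDegree]
      simp [hk.ne]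
    · simp [coeff_eq_zero_of_natDegree_lt hi]
  obtain ⟨H, hHg, -, hH⟩ := lifts_and_natDegree_eq_and_monic hlifts hg
  refine ⟨-s, H, hH, hHg, fun hX ↦ ?_⟩
  have hcoeff : (g.coeff i₀).coeff 0 = PowerSeries.constantCoeff (H.coeff i₀) := by
    rw [← hHg, coeff_map, PowerSeries.coeff_coe]
    simp
  rw [← coeff_map, hX, coeff_X_pow, if_neg hi₀.ne, coeff_coeff_scaleRoots_single,
    neg_mul, zero_sub, neg_neg, hs₀, HahnSeries.coeff_order_eq_zero] at hcoeff
  exact hne₀ hcoeff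

theorem not_irreducible_map_ofPowerSeries_of_nextCoeff_eq_zero [CharZero F]
    {H : (PowerSeries F)[X]} (hH : H.Monic) (hnext : H.nextCoeff = 0)
    (hsplit : (H.map PowerSeries.constantCoeff).Splits)
    (hne : H.map PowerSeries.constantCoeff ≠ X ^ H.natDegree) :
    ¬Irreducible (H.map (HahnSeries.ofPowerSeries ℤ F)) := by
  have hnext' : (H.map PowerSeries.constantCoeff).nextCoeff = 0 := by
    rw [nextCoeff_map_of_leadingCoeff_ne_zero _ (by simp [hH.leadingCoeff]), hnext, map_zero]
  obtain ⟨a, ha, b, hb, hab⟩ := exists_ne_mem_roots_of_nextCoeff_eq_zero (hH.map _) hsplit hnext'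
    (by rwa [hH.natDegree_map])
  exact not_irreducible_map_ofPowerSeries hH hab (isRoot_of_mem_roots ha) (isRoot_of_mem_roots hb)

theorem hahnSeriesMap_comp_ofPowerSeries {L : Type*} [Field L] (φ : F →+* L) :
    (hahnSeriesMap ℤ φ).comp (HahnSeries.ofPowerSeries ℤ F) =
      (HahnSeries.ofPowerSeries ℤ L).comp (PowerSeries.map φ) := by
  ext x k
  simp [PowerSeries.coeff_coe, apply_ite φ]

theorem not_irreducible_map_of_splitsDegreeLE {L : Type*} [Field L] [CharZero L]
    {φ : F →+* L} {D : ℕ} (hφ : SplitsDegreeLE φ D) {f : (LaurentSeries F)[X]}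
    (hf : f.Monic) (hfD : f.natDegree = D) (hnext : f.nextCoeff = 0) (hne : f ≠ X ^ D)
    (hdvd : ∀ i < D, ((D - i : ℕ) : ℤ) ∣ (f.coeff i).order) :
    ¬Irreducible (f.map (hahnSeriesMap ℤ φ)) := by
  subst hfD
  obtain ⟨n, H, hH, hHf, hHX⟩ := exists_scaleRoots_eq_map_ofPowerSeries hf hne hdvd
  have hdeg : H.natDegree = f.natDegree := by
    rw [← hH.natDegree_map (HahnSeries.ofPowerSeries ℤ F), hHf, natDegree_scaleRoots]
  have hHnext : H.nextCoeff = 0 := by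
    refine HahnSeries.ofPowerSeries_injective (Γ := ℤ) ?_
    rw [map_zero, ← nextCoeff_map HahnSeries.ofPowerSeries_injective, hHf, nextCoeff_scaleRoots,
      hnext, zero_mul]
  have hreduce : (H.map (PowerSeries.map φ)).map PowerSeries.constantCoeff =
      (H.map PowerSeries.constantCoeff).map φ := by
    rw [Polynomial.map_map, Polynomial.map_map]
    rfl
  have hscale : (f.map (hahnSeriesMap ℤ φ)).scaleRoots (hahnSeriesMap ℤ φ (.single n 1)) =
      (H.map (PowerSeries.map φ)).map (HahnSeries.ofPowerSeries ℤ L) := by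
    rw [← map_scaleRoots _ _ _ (by simp [hf.leadingCoeff]), ← hHf, Polynomial.map_map,
      Polynomial.map_map, hahnSeriesMap_comp_ofPowerSeries]
  intro hirr
  refine not_irreducible_map_ofPowerSeries_of_nextCoeff_eq_zero (hH.map (PowerSeries.map φ))
    ?_ ?_ ?_ (hscale ▸ irreducible_scaleRoots hirr (by simp))
  · rw [nextCoeff_map (PowerSeries.map_injective φ φ.injective), hHnext, map_zero]
  · rw [hreduce]
    exact hφ _ (hH.map _) ((hH.natDegree_map _).trans hdeg).le
  · rw [hreduce, hH.natDegree_map, hdeg, ← map_X φ, ← Polynomial.map_pow]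
    exact (map_injective φ φ.injective).ne hHX

theorem IsBoundedField.exists_not_irreducible_map [CharZero F] (hF : IsBoundedField F)
    (E : IntermediateField F (AlgebraicClosure F)) [FiniteDimensional F E] {D : ℕ} (hD : 2 ≤ D) :
    ∃ (E' : IntermediateField F (AlgebraicClosure F)) (ψ : LaurentSeries E →+* LaurentSeries E'),
      FiniteDimensional F E' ∧ ψ.Finite ∧
      ∀ f : (LaurentSeries E)[X], f.Monic → f.natDegree = D → ¬Irreducible (f.map ψ) := by
  obtain ⟨E', hle, hfin, hsplit⟩ := hF.exists_splitsDegreeLE_inclusion E D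
  have : NeZero D.factorial := ⟨D.factorial_ne_zero⟩
  have : CharZero (LaurentSeries E) :=
    charZero_of_injective_ringHom (HahnSeries.C_injective (Γ := ℤ) (R := E))
  let τ := laurentRamify E D.factorial
  let φ := hahnSeriesMap ℤ (inclusion hle).toRingHom
  refine ⟨E', φ.comp τ, hfin, (finite_hahnSeriesMap ℤ (finite_inclusion hle)).comp
    (finite_laurentRamify _), fun f hf hfD ↦ ?_⟩
  refine not_irreducible_map_of_depressed _ hD (fun g hg hgD hnext hne ↦ ?_) hf hfD
  rw [← Polynomial.map_map]
  refine not_irreducible_map_of_splitsDegreeLE hsplit (hg.map τ)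
    (by rw [hg.natDegree_map, hgD]) (by rw [nextCoeff_map_eq, hnext, map_zero])
    (fun h ↦ hne (map_injective τ τ.injective (by simpa using h))) fun i hi ↦ ?_
  rw [coeff_map]
  exact (Int.natCast_dvd_natCast.mpr (Nat.dvd_factorial (by lia) (by lia))).trans
    (dvd_order_laurentRamify ..)

end Newton

theorem adjoin_elements_of_bounded_degree_finiteDimensional_over_laurentSeries_general
    {K : Type*} [Field K] [CharZero K] (hK : IsBoundedField K) (d : ℕ) :
    FiniteDimensional (LaurentSeries K)
      (IntermediateField.adjoin (LaurentSeries K)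
        {x : AlgebraicClosure (LaurentSeries K) |
          (minpoly (LaurentSeries K) x).natDegree ≤ d}) := by
  let ι := {E : IntermediateField K (AlgebraicClosure K) // FiniteDimensional K E}
  have hφ₀ : (algebraMap K (⊥ : IntermediateField K (AlgebraicClosure K))).Finite :=
    RingHom.finite_algebraMap.mpr inferInstance
  refine isBoundedField_of_tower (ι := ι) (E := fun E ↦ LaurentSeries E.1)
    (i := ⟨⊥, inferInstance⟩) (finite_hahnSeriesMap ℤ hφ₀) (fun ⟨E, _⟩ D hD ↦ ?_) d
  obtain ⟨E', ψ, hE', hψ, hred⟩ := hK.exists_not_irreducible_map E hD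
  exact ⟨⟨E', hE'⟩, ψ, hψ, hred⟩

/-- Let `p` be a prime, `L = ℚ_p((T))` the field of formal Laurent series over `ℚ_p`, and
`Ω` a fixed algebraic closure of `L`.  For any positive integer `d`, the intermediate field
of `Ω/L` generated by all elements of `Ω` whose degree over `L` is at most `d` (i.e. by the
roots of all irreducible polynomials over `L` of degree at most `d`) is a finite extension
of `L`. -/
theorem adjoin_elements_of_bounded_degree_finiteDimensional_over_laurentSeries
    (p : ℕ) [Fact p.Prime] (d : ℕ) (hd : 0 < d) :
    FiniteDimensional (LaurentSeries ℚ_[p])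
      (IntermediateField.adjoin (LaurentSeries ℚ_[p])
        {x : AlgebraicClosure (LaurentSeries ℚ_[p]) |
          (minpoly (LaurentSeries ℚ_[p]) x).natDegree ≤ d}) :=
  adjoin_elements_of_bounded_degree_finiteDimensional_over_laurentSeries_general
    (isBoundedField_of_properSpace ℚ_[p]) d
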